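/- Let l ≥ 1, let k_1, …, k_l be integers with k_i ≥ 2 for all i and k = Σ k_i, and let d_1, …, d_l be positive integers with d = Σ d_i. Partition the weight variables w = (w_1, …, w_l) ∈ ℝ^{k_1} × ⋯ × ℝ^{k_l} = ℝ^k into l blocks. Let y(w, x) be a real polynomial in (w, x) ∈ ℝ^k × ℝ^N such that every monomial of y has total degree at most d_i in the components of w_i, for each i. For each w ∈ ℝ^k let A_w = {x ∈ ℝ^N : y(w, x) ≥ 0}, and let 𝓐 = {A_w : w ∈ ℝ^k}. Define v = (k_1/k, …, k_l/k), u = (d_1/d, …, d_l/d), and H(v|u) = Σ_{i=1}^l (k_i/k)·lg(d·k_i/(k·d_i)). Then every finite subset of ℝ^N shattered by 𝓐 has cardinality at most 2k·(lg(4ed) − H(v|u)). -/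

import Mathlib

open MvPolynomial

noncomputable def vcdd {σ : Type*} [Fintype σ] (p : MvPolynomial σ ℝ) (q u : σ → ℝ) : ℝ :=
  ∑ t, u t * eval q (pderiv t p)

section
variable {σ : Type*} [Fintype σ]

lemma vcdd_add (p p' : MvPolynomial σ ℝ) (q u : σ → ℝ) :
    vcdd (p + p') q u = vcdd p q u + vcdd p' q u := by
  simp [vcdd, mul_add, Finset.sum_add_distrib]

lemma vcdd_sub (p p' : MvPolynomial σ ℝ) (q u : σ → ℝ) :
    vcdd (p - p') q u = vcdd p q u - vcdd p' q u := by
  simp [vcdd, mul_sub, Finset.sum_sub_distrib]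

lemma vcdd_sum {J : Type*} (s : Finset J) (p : J → MvPolynomial σ ℝ) (q u : σ → ℝ) :
    vcdd (∑ j ∈ s, p j) q u = ∑ j ∈ s, vcdd (p j) q u := by
  simp only [vcdd, map_sum, Finset.mul_sum]
  exact Finset.sum_comm

lemma vcdd_mul (p p' : MvPolynomial σ ℝ) (q u : σ → ℝ) :
    vcdd (p * p') q u = eval q p * vcdd p' q u + vcdd p q u * eval q p' := by
  simp only [vcdd, Derivation.leibniz, smul_eq_mul, map_add, map_mul, Finset.mul_sum,
    Finset.sum_mul, ← Finset.sum_add_distrib]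
  refine Finset.sum_congr rfl fun t _ => ?_
  ring

lemma vcdd_C (a : ℝ) (q u : σ → ℝ) : vcdd (C a : MvPolynomial σ ℝ) q u = 0 := by
  simp [vcdd]

lemma vcdd_one (q u : σ → ℝ) : vcdd (1 : MvPolynomial σ ℝ) q u = 0 := by
  simp [vcdd]

lemma vcdd_X (s : σ) (q u : σ → ℝ) : vcdd (X s : MvPolynomial σ ℝ) q u = u s := by
  classical
  simp [vcdd, pderiv_X, Pi.single_apply, apply_ite]

lemma vcdd_rename_inl {J : Type*} [Fintype J] (p : MvPolynomial σ ℝ) (q u : σ ⊕ J → ℝ) :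
    vcdd (rename Sum.inl p : MvPolynomial (σ ⊕ J) ℝ) q u
      = vcdd p (q ∘ Sum.inl) (u ∘ Sum.inl) := by
  induction p using MvPolynomial.induction_on with
  | C a => simp [vcdd_C]
  | add p p' h h' => simp [vcdd_add, h, h']
  | mul_X p i h => simp [vcdd_mul, vcdd_X, h, eval_rename]

/-- the directional derivative as a continuous linear form -/
noncomputable def vcD (p : MvPolynomial σ ℝ) (q : σ → ℝ) : (σ → ℝ) →L[ℝ] ℝ :=
  ∑ t, eval q (pderiv t p) • (ContinuousLinearMap.proj t : (σ → ℝ) →L[ℝ] ℝ)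

lemma vcD_apply (p : MvPolynomial σ ℝ) (q v : σ → ℝ) : vcD p q v = vcdd p q v := by
  simp [vcD, vcdd, mul_comm]

/-- Fréchet derivative of polynomial evaluation. -/
lemma vc_hasFDerivAt (p : MvPolynomial σ ℝ) (q : σ → ℝ) :
    HasFDerivAt (fun w => eval w p) (vcD p q) q := by
  induction p using MvPolynomial.induction_on with
  | C a =>
    have e : (fun w : σ → ℝ => eval w (C a)) = fun _ => a := by funext w; simp
    have e2 : vcD (C a) q = 0 := by ext v; simp [vcD_apply, vcdd_C]
    rw [e, e2]
    exact hasFDerivAt_const a q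
  | add p p' h h' =>
    have e : (fun w : σ → ℝ => eval w (p + p')) = fun w => eval w p + eval w p' := by
      funext w; simp
    have e2 : vcD (p + p') q = vcD p q + vcD p' q := by ext v; simp [vcD_apply, vcdd_add]
    rw [e, e2]
    exact h.add h'
  | mul_X p i h =>
    have e : (fun w : σ → ℝ => eval w (p * X i)) = fun w => eval w p * w i := by
      funext w; simp
    have e2 : vcD (p * X i) q = eval q p • (ContinuousLinearMap.proj i : (σ → ℝ) →L[ℝ] ℝ)
        + q i • vcD p q := by
      ext v; simp [vcD_apply, vcdd_mul, vcdd_X, mul_comm]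
    rw [e, e2]
    exact h.mul (ContinuousLinearMap.proj i : (σ → ℝ) →L[ℝ] ℝ).hasFDerivAt

/-- restriction to a line -/
noncomputable def vcline (q u : σ → ℝ) : MvPolynomial σ ℝ →ₐ[ℝ] Polynomial ℝ :=
  aeval (fun s => Polynomial.C (q s) + Polynomial.C (u s) * Polynomial.X)

lemma vcline_coeff (q u : σ → ℝ) (p : MvPolynomial σ ℝ) :
    (vcline q u p).coeff 0 = eval q p ∧ (vcline q u p).coeff 1 = vcdd p q u := by
  induction p using MvPolynomial.induction_on with
  | C a => simp [vcline, vcdd_C, Polynomial.coeff_C]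
  | add p p' h h' => simp [vcdd_add, h, h']
  | mul_X p i h =>
    have hX : vcline q u (X i) = Polynomial.C (q i) + Polynomial.C (u i) * Polynomial.X := by
      simp [vcline]
    rw [map_mul, Polynomial.mul_coeff_zero, Polynomial.mul_coeff_one, h.1, h.2, hX, vcdd_mul, vcdd_X]
    simp [Polynomial.coeff_C]

lemma vc_homog_aeval (h : σ → Polynomial ℝ) (m : ℕ) (g : MvPolynomial σ ℝ)
    (hg : g.IsHomogeneous m) :
    aeval (fun s => Polynomial.X * h s) g = Polynomial.X ^ m * aeval h g := by
  rw [aeval_def, aeval_def, eval₂_eq', eval₂_eq', Finset.mul_sum]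
  refine Finset.sum_congr rfl fun a ha => ?_
  have := hg (mem_support_iff.1 ha)
  simp only [mul_pow, Finset.prod_mul_distrib, Finset.prod_pow_eq_pow_sum]
  have h2 : ∑ i, a i = m := by
    rw [← this, Finsupp.weight_apply, Finsupp.sum_fintype] <;> simp
  rw [h2]; ring

lemma vc_lowest (h : σ → Polynomial ℝ) (m : ℕ) (g : MvPolynomial σ ℝ)
    (hg : ∀ j < m, homogeneousComponent j g = 0) :
    ∃ r, aeval (fun s => Polynomial.X * h s) g
      = Polynomial.X ^ m * (aeval h (homogeneousComponent m g) + Polynomial.X * r) := by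
  have e : aeval (fun s => Polynomial.X * h s) g
      = ∑ j ∈ Finset.range (g.totalDegree + m + 1),
          Polynomial.X ^ j * aeval h (homogeneousComponent j g) := by
    conv_lhs => rw [← sum_homogeneousComponent g]
    rw [map_sum]
    have h0 : ∑ j ∈ Finset.range (g.totalDegree + m + 1),
          Polynomial.X ^ j * aeval h (homogeneousComponent j g) = 
          ∑ j ∈ Finset.range (g.totalDegree + 1),
          Polynomial.X ^ j * aeval h (homogeneousComponent j g) := by
      symm
      apply Finset.sum_subset
      · intro x; simp; omega
      · intro x _ hx
        rw [homogeneousComponent_eq_zero]; · simp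
        simp at hx; omega
    rw [h0]
    exact Finset.sum_congr rfl fun j _ => vc_homog_aeval h j _ (homogeneousComponent_isHomogeneous j g)
  have e2 : g.totalDegree + m + 1 = m + (1 + g.totalDegree) := by ring
  rw [e, e2, Finset.sum_range_add, Finset.sum_eq_zero, zero_add, add_comm 1, Finset.sum_range_succ']
  · refine ⟨∑ k ∈ Finset.range g.totalDegree, Polynomial.X ^ k * aeval h (homogeneousComponent (m + (k+1)) g), ?_⟩
    rw [mul_add, add_comm, Finset.mul_sum, Finset.mul_sum]
    congr 1
    refine Finset.sum_congr rfl fun j _ => ?_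
    ring
  · intro j hj
    rw [hg j (Finset.mem_range.1 hj)]; simp

/-- Key independence statement. -/
lemma vc_indep (f : σ → MvPolynomial σ ℝ) (P : Finset (σ → ℝ))
    (h0 : ∀ p ∈ P, ∀ s, eval p (f s) = 0)
    (hJ : ∀ p ∈ P, ∀ u : σ → ℝ, (∀ s, vcdd (f s) p u = 0) → u = 0)
    (b : P → MvPolynomial σ ℝ)
    (hb : ∀ p q : P, p ≠ q → eval q.1 (b p) = 0) (hb1 : ∀ p : P, eval p.1 (b p) = 1)
    (g : P → MvPolynomial σ ℝ) (hg : ∑ p, b p * aeval f (g p) = 0) : ∀ p, g p = 0 := by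
  classical
  suffices H : ∀ m, ∀ p, homogeneousComponent m (g p) = 0 by
    intro p
    rw [← sum_homogeneousComponent (g p)]
    exact Finset.sum_eq_zero fun j _ => H j p
  intro m
  induction m using Nat.strong_induction_on with
  | _ m ih =>
  intro q
  let L : (σ → ℝ) →ₗ[ℝ] (σ → ℝ) :=
    { toFun := fun u s => vcdd (f s) q.1 u
      map_add' := by intro u v; ext s; simp [vcdd, add_mul, Finset.sum_add_distrib]
      map_smul' := by intro c v; ext s; simp [vcdd, Finset.mul_sum, mul_assoc] }
  have Linj : Function.Injective L := by
    rw [injective_iff_map_eq_zero]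
    intro u hu
    exact hJ q.1 q.2 u fun s => congrFun hu s
  have Lsurj : Function.Surjective L := LinearMap.injective_iff_surjective.1 Linj
  apply MvPolynomial.funext
  intro v
  obtain ⟨u, rfl⟩ := Lsurj v
  have hdiv : ∀ s, ∃ h : Polynomial ℝ, vcline q.1 u (f s) = Polynomial.X * h := by
    intro s
    have := (vcline_coeff q.1 u (f s)).1
    rw [h0 q.1 q.2 s] at this
    exact Polynomial.X_dvd_iff.2 this
  choose h hh using hdiv
  have hcoef : ∀ s, (h s).coeff 0 = L u s := by
    intro s
    have := (vcline_coeff q.1 u (f s)).2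
    rw [hh s, Polynomial.coeff_X_mul] at this
    exact this
  have key : ∀ p : P, ∃ r, vcline q.1 u (aeval f (g p))
      = Polynomial.X ^ m * (aeval h (homogeneousComponent m (g p)) + Polynomial.X * r) := by
    intro p
    obtain ⟨r, hr⟩ := vc_lowest h m (g p) (fun j hj => ih j hj p)
    refine ⟨r, ?_⟩
    rw [← hr]
    have : (vcline q.1 u).comp (aeval f) = aeval (fun s => Polynomial.X * h s) := by
      ext s; simp [hh]
    rw [← this]; rfl
  choose r hr using key
  have h1 := congrArg (vcline q.1 u) hg
  simp only [map_sum, map_mul, hr, map_zero] at h1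
  have h2 : Polynomial.X ^ m * ∑ p : P, vcline q.1 u (b p) *
      (aeval h (homogeneousComponent m (g p)) + Polynomial.X * r p) = 0 := by
    rw [← h1, Finset.mul_sum]
    refine Finset.sum_congr rfl fun j _ => ?_
    ring
  have h3 := (mul_eq_zero.1 h2).resolve_left (pow_ne_zero _ Polynomial.X_ne_zero)
  have h4 := congrArg (fun z => Polynomial.eval 0 z) h3
  simp only [Polynomial.eval_finsetSum, Polynomial.eval_mul, Polynomial.eval_add, Polynomial.eval_X,
    zero_mul, add_zero, Polynomial.eval_zero] at h4
  rw [Finset.sum_eq_single q] at h4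
  · rw [← Polynomial.coeff_zero_eq_eval_zero, (vcline_coeff _ _ _).1, hb1, one_mul] at h4
    rw [map_zero, ← h4]
    have h5 : ∀ z : MvPolynomial σ ℝ, Polynomial.eval 0 (aeval h z) = eval (L u) z := by
      intro z
      induction z using MvPolynomial.induction_on with
      | C a => simp
      | add p p' h h' => simp [h, h']
      | mul_X p i h => simp [h, ← hcoef, Polynomial.coeff_zero_eq_eval_zero]
    rw [h5]
  · intro p _ hp
    rw [← Polynomial.coeff_zero_eq_eval_zero, (vcline_coeff _ _ _).1, hb p q hp, zero_mul]
  · simp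

/-- interpolation -/
lemma vc_interp (P : Finset (σ → ℝ)) (p : P) : ∃ b : MvPolynomial σ ℝ,
    (∀ q : P, p ≠ q → eval q.1 b = 0) ∧ eval p.1 b = 1 := by
  classical
  have : ∀ q : σ → ℝ, ∃ c : MvPolynomial σ ℝ, p.1 ≠ q → (eval q c = 0 ∧ eval p.1 c = 1) := by
    intro q
    by_cases hq : p.1 = q
    · exact ⟨0, fun h => absurd hq h⟩
    · obtain ⟨s, hs⟩ := Function.ne_iff.1 hq
      refine ⟨C (p.1 s - q s)⁻¹ * (X s - C (q s)), fun _ => ⟨by simp, ?_⟩⟩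
      simp
      exact inv_mul_cancel₀ (sub_ne_zero.2 hs)
  choose c hc using this
  refine ⟨∏ q ∈ P.erase p.1, c q, ?_, ?_⟩
  · intro q hq
    have hq' : p.1 ≠ q.1 := fun h => hq (Subtype.ext h)
    rw [map_prod]
    exact Finset.prod_eq_zero (Finset.mem_erase.2 ⟨hq'.symm, q.2⟩) (hc q.1 hq').1
  · rw [map_prod]
    exact Finset.prod_eq_one fun q hq => (hc q (Finset.mem_erase.1 hq).1.symm).2
end

section
variable {σ : Type*} [Fintype σ] {ι : Type*} [DecidableEq ι]

/-- exponents with block degrees at most `M` -/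
def vcE (π : σ → ι) (M : ι → ℕ) : Set (σ →₀ ℕ) :=
  {m | ∀ i, ∑ s, (if π s = i then m s else 0) ≤ M i}

/-- block degrees at most `M` -/
def vcBD (π : σ → ι) (M : ι → ℕ) (p : MvPolynomial σ ℝ) : Prop :=
  p ∈ restrictSupport ℝ (vcE π M)

lemma vcE_add (π : σ → ι) (M M' : ι → ℕ) (a b : σ →₀ ℕ) (ha : a ∈ vcE π M) (hb : b ∈ vcE π M') :
    a + b ∈ vcE π (M + M') := by
  classical
  intro i
  have h1 := ha i
  have h2 := hb i
  refine le_trans (le_of_eq ?_) (add_le_add h1 h2)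
  rw [← Finset.sum_add_distrib]
  refine Finset.sum_congr rfl fun s _ => ?_
  split_ifs <;> simp

lemma vcE_mono (π : σ → ι) (M : ι → ℕ) (a b : σ →₀ ℕ) (ha : a ∈ vcE π M) (hb : b ≤ a) :
    b ∈ vcE π M := by
  classical
  intro i
  refine le_trans (Finset.sum_le_sum fun s _ => ?_) (ha i)
  have := hb s
  split_ifs <;> simp [this]

lemma vcBD_mono {π : σ → ι} {M M' : ι → ℕ} {p : MvPolynomial σ ℝ} (h : M ≤ M') (hp : vcBD π M p) :
    vcBD π M' p := by
  apply restrictSupport_mono ℝ _ hp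
  intro m hm i
  exact (hm i).trans (h i)

lemma vcBD_add {π : σ → ι} {M : ι → ℕ} {p q : MvPolynomial σ ℝ} (hp : vcBD π M p)
    (hq : vcBD π M q) : vcBD π M (p + q) := Submodule.add_mem _ hp hq

lemma vcBD_sub {π : σ → ι} {M : ι → ℕ} {p q : MvPolynomial σ ℝ} (hp : vcBD π M p)
    (hq : vcBD π M q) : vcBD π M (p - q) := Submodule.sub_mem _ hp hq

lemma vcBD_sum {π : σ → ι} {M : ι → ℕ} {J : Type*} (s : Finset J) {p : J → MvPolynomial σ ℝ}
    (hp : ∀ j ∈ s, vcBD π M (p j)) : vcBD π M (∑ j ∈ s, p j) := Submodule.sum_mem _ hp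

lemma vcBD_mul {π : σ → ι} {M M' : ι → ℕ} {p q : MvPolynomial σ ℝ} (hp : vcBD π M p)
    (hq : vcBD π M' q) : vcBD π (M + M') (p * q) := by
  classical
  rw [vcBD, mem_restrictSupport_iff]
  intro m hm
  have := support_mul p q hm
  obtain ⟨a, ha, b, hb, rfl⟩ := Finset.mem_add.1 this
  exact vcE_add _ _ _ _ _ (hp ha) (hq hb)

lemma vcBD_C (π : σ → ι) (M : ι → ℕ) (a : ℝ) : vcBD π M (C a) := by
  rw [vcBD, ← monomial_zero', monomial_mem_restrictSupport]
  left
  intro i; simp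

lemma vcBD_one (π : σ → ι) (M : ι → ℕ) : vcBD π M 1 := by
  simpa using vcBD_C π M 1

lemma vcBD_X (π : σ → ι) (s : σ) : vcBD π (Pi.single (π s) 1) (X s) := by
  classical
  rw [vcBD, X, monomial_mem_restrictSupport]
  left
  intro i
  rw [Finset.sum_eq_single s]
  · by_cases h : π s = i
    · subst h; simp
    · simp [h]
  · intro b _ hb
    simp [hb.symm]
  · simp

lemma vcBD_pow {π : σ → ι} {M : ι → ℕ} {p : MvPolynomial σ ℝ} (hp : vcBD π M p) (n : ℕ) :
    vcBD π (n • M) (p ^ n) := by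
  induction n with
  | zero => simpa using vcBD_one π _
  | succ n ih => rw [pow_succ, succ_nsmul]; exact vcBD_mul ih hp

lemma vcBD_prod {π : σ → ι} {J : Type*} (s : Finset J) {M : J → ι → ℕ} {p : J → MvPolynomial σ ℝ}
    (hp : ∀ j, vcBD π (M j) (p j)) : vcBD π (∑ j ∈ s, M j) (∏ j ∈ s, p j) := by
  classical
  induction s using Finset.induction_on with
  | empty => simpa using vcBD_one π _
  | insert a s ha ih => rw [Finset.sum_insert ha, Finset.prod_insert ha]; exact vcBD_mul (hp a) ih

lemma vcBD_pderiv {π : σ → ι} {M : ι → ℕ} {p : MvPolynomial σ ℝ} (hp : vcBD π M p) (t : σ) :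
    vcBD π M (pderiv t p) := by
  rw [p.as_sum, map_sum]
  apply vcBD_sum
  intro m hm
  rw [pderiv_monomial, vcBD, monomial_mem_restrictSupport]
  left
  exact vcE_mono _ _ _ _ (hp hm) tsub_le_self

lemma vcBD_totalDegree (π : σ → ι) (p : MvPolynomial σ ℝ) : vcBD π (fun _ => p.totalDegree) p := by
  classical
  rw [vcBD, mem_restrictSupport_iff]
  intro m hm i
  refine le_trans ?_ (le_totalDegree hm)
  rw [Finsupp.sum_fintype _ _ (by simp)]
  refine Finset.sum_le_sum fun s _ => ?_
  split_ifs <;> simp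

lemma vc_card_simplex (F : Type*) [Fintype F] (T : ℕ) :
    Finite {a : F → ℕ // ∑ s, a s ≤ T} ∧
    Nat.card {a : F → ℕ // ∑ s, a s ≤ T} = (T + Fintype.card F).choose (Fintype.card F) := by
  classical
  let e : {a : F → ℕ // ∑ s, a s ≤ T} ≃ {P : Option F → ℕ // ∑ i, P i = T} :=
    { toFun := fun a => ⟨fun o => o.elim (T - ∑ s, a.1 s) a.1, by
        rw [Fintype.sum_option]; simp; have := a.2; omega⟩
      invFun := fun P => ⟨fun s => P.1 (some s), by
        have := P.2; rw [Fintype.sum_option] at this; show ∑ s, P.1 (some s) ≤ T; omega⟩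
      left_inv := fun a => rfl
      right_inv := fun P => by
        have := P.2
        rw [Fintype.sum_option] at this
        apply Subtype.ext; funext o
        cases o with
        | none => simp; omega
        | some s => rfl }
  let e2 := e.trans (Sym.equivNatSumOfFintype (Option F) T).symm
  refine ⟨Finite.of_equiv _ e2.symm, ?_⟩
  rw [Nat.card_congr e2, Nat.card_eq_fintype_card, Sym.card_sym_eq_choose, Fintype.card_option]
  have : Fintype.card F + 1 + T - 1 = T + Fintype.card F := by omega
  rw [this, Nat.choose_symm_add]

lemma vc_card_E [Fintype ι] (π : σ → ι) (M : ι → ℕ) :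
    Finite (vcE π M) ∧ Nat.card (vcE π M) ≤
      ∏ i, (M i + Fintype.card {s // π s = i}).choose (Fintype.card {s // π s = i}) := by
  classical
  let F : vcE π M → (∀ i, {a : {s // π s = i} → ℕ // ∑ s, a s ≤ M i}) := fun m i =>
    ⟨fun s => m.1 s.1, by
      have := m.2 i
      rw [← Finset.sum_filter] at this
      refine le_trans (le_of_eq ?_) this
      rw [← Finset.sum_subtype_of_mem (p := fun s => π s = i)]
      · refine Finset.sum_congr ?_ fun _ _ => rfl
        ext x; simp [x.2]
      · intro x hx; simpa using hx⟩
  have hF : Function.Injective F := by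
    intro m m' h
    apply Subtype.ext; ext s
    have := congrFun (congrArg Subtype.val (congrFun h (π s))) ⟨s, rfl⟩
    exact this
  have : ∀ i, Finite {a : {s // π s = i} → ℕ // ∑ s, a s ≤ M i} := fun i => (vc_card_simplex _ _).1
  refine ⟨Finite.of_injective F hF, ?_⟩
  refine (Nat.card_le_card_of_injective F hF).trans (le_of_eq ?_)
  rw [Nat.card_pi]
  exact Finset.prod_congr rfl fun i _ => (vc_card_simplex _ _).2

lemma vc_dim [Fintype ι] (π : σ → ι) (d : ι → ℕ) (f : σ → MvPolynomial σ ℝ)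
    (hf : ∀ s, vcBD π d (f s)) (P : Finset (σ → ℝ))
    (h0 : ∀ p ∈ P, ∀ s, eval p (f s) = 0)
    (hJ : ∀ p ∈ P, ∀ u : σ → ℝ, (∀ s, vcdd (f s) p u = 0) → u = 0) :
    ∃ c : ℕ, ∀ T : ℕ, P.card * (T + Fintype.card σ).choose (Fintype.card σ) ≤
      ∏ i, (c + T * d i + Fintype.card {s // π s = i}).choose (Fintype.card {s // π s = i}) := by
  classical
  choose b hb hb1 using vc_interp P
  refine ⟨∑ p, (b p).totalDegree, fun T => ?_⟩
  set c := ∑ p, (b p).totalDegree with hc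
  let A := {a : σ → ℕ // ∑ s, a s ≤ T}
  have : Finite A := (vc_card_simplex σ T).1
  haveI := Fintype.ofFinite A
  let V := restrictSupport ℝ (vcE π (fun i => c + T * d i))
  let mon : A → (σ →₀ ℕ) := fun a => Finsupp.equivFunOnFinite.symm a.1
  have hmon : Function.Injective mon := fun a a' h =>
    Subtype.ext (Finsupp.equivFunOnFinite.symm.injective h)
  have hmem : ∀ x : P × A, b x.1 * aeval f (monomial (mon x.2) (1:ℝ)) ∈ V := by
    intro x
    have h1 : vcBD π (fun _ => c) (b x.1) := vcBD_mono
      (fun i => Finset.single_le_sum (f := fun p => (b p).totalDegree) (fun _ _ => Nat.zero_le _)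
        (Finset.mem_univ x.1)) (vcBD_totalDegree π (b x.1))
    have h2 : vcBD π (∑ s, (x.2.1 s) • d) (∏ s, f s ^ (x.2.1 s)) :=
      vcBD_prod Finset.univ fun s => vcBD_pow (hf s) _
    have h3 : aeval f (monomial (mon x.2) (1:ℝ)) = ∏ s, f s ^ (x.2.1 s) := by
      rw [aeval_monomial, map_one, one_mul, Finsupp.prod_fintype _ _ (by simp)]
      rfl
    rw [h3]
    refine vcBD_mono ?_ (vcBD_mul h1 h2)
    intro i
    simp only [Pi.add_apply, Finset.sum_apply, Pi.smul_apply, smul_eq_mul, ← Finset.sum_mul]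
    gcongr
    exact x.2.2
  have hli : LinearIndependent ℝ (fun x : P × A => (⟨_, hmem x⟩ : V)) := by
    rw [← LinearMap.linearIndependent_iff_of_injOn (f := V.subtype) (Subtype.val_injective.injOn)]
    rw [Fintype.linearIndependent_iff]
    intro g hg
    simp only [Function.comp, Submodule.subtype_apply] at hg
    have := vc_indep f P h0 hJ b (fun p q h => hb p q h) hb1
      (fun p => ∑ a : A, monomial (mon a) (g (p, a))) (by
        rw [← hg, Fintype.sum_prod_type]
        refine Finset.sum_congr rfl fun p _ => ?_
        rw [map_sum, Finset.mul_sum]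
        refine Finset.sum_congr rfl fun a _ => ?_
        have : monomial (mon a) (g (p,a)) = g (p,a) • monomial (mon a) (1:ℝ) := by
          simp [smul_monomial]
        rw [this, map_smul, mul_smul_comm])
    rintro ⟨p, a⟩
    have h4 := congrArg (coeff (mon a)) (this p)
    rw [coeff_sum, Finset.sum_eq_single a] at h4
    · simpa using h4
    · intro a' _ ha'
      rw [coeff_monomial, if_neg (fun h => ha' (hmon h))]
    · simp
  obtain ⟨hfin, hcard⟩ := vc_card_E π (fun i => c + T * d i)
  haveI := Fintype.ofFinite (vcE π (fun i => c + T * d i))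
  have B := basisRestrictSupport ℝ (vcE π (fun i => c + T * d i))
  have : Module.Finite ℝ V := Module.Finite.of_basis B
  have h5 := hli.fintype_card_le_finrank
  rw [Module.finrank_eq_card_basis B, Fintype.card_prod, Fintype.card_coe] at h5
  rw [← Nat.card_eq_fintype_card, (vc_card_simplex σ T).2] at h5
  rw [Nat.card_eq_fintype_card] at hcard
  exact h5.trans hcard

/-- Multihomogeneous Bézout inequality for nondegenerate zeros. -/
lemma vc_bezout [Fintype ι] (π : σ → ι) (d : ι → ℕ) (f : σ → MvPolynomial σ ℝ)
    (hf : ∀ s, vcBD π d (f s)) (P : Finset (σ → ℝ))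
    (h0 : ∀ p ∈ P, ∀ s, eval p (f s) = 0)
    (hJ : ∀ p ∈ P, ∀ u : σ → ℝ, (∀ s, vcdd (f s) p u = 0) → u = 0) :
    (P.card : ℝ) * ∏ i, (((Fintype.card {s // π s = i}).factorial : ℕ) : ℝ) ≤
      (Fintype.card σ).factorial * ∏ i, (d i : ℝ) ^ (Fintype.card {s // π s = i}) := by
  obtain ⟨c, hc⟩ := vc_dim π d f hf P h0 hJ
  set κ : ι → ℕ := fun i => Fintype.card {s // π s = i} with hκ
  have hsum : ∑ i, κ i = Fintype.card σ := by
    rw [← Fintype.card_sigma]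
    exact Fintype.card_congr (Equiv.sigmaFiberEquiv π)
  set K := Fintype.card σ
  have key : ∀ T : ℕ, 0 < T → (P.card : ℝ) * ∏ i, ((κ i).factorial : ℝ) ≤
      K.factorial * ∏ i, ((d i : ℝ) + (c + κ i : ℝ) * (T:ℝ)⁻¹) ^ κ i := by
    intro T hT
    have hT' : (0:ℝ) < T := by exact_mod_cast hT
    have h1 : ((P.card : ℝ) * (T + K).choose K) ≤ ∏ i, (((c + T * d i + κ i).choose (κ i) : ℕ) : ℝ) := by
      exact_mod_cast hc T
    have h2 : (T : ℝ) ^ K ≤ K.factorial * ((T + K).choose K) := by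
      have : T ^ K ≤ K.factorial * ((T + K).choose K) := by
        rw [← Nat.descFactorial_eq_factorial_mul_choose]
        refine le_trans ?_ (Nat.pow_sub_le_descFactorial _ _)
        apply Nat.pow_le_pow_left; omega
      exact_mod_cast this
    have h3 : ∀ i, ((κ i).factorial : ℝ) * (((c + T * d i + κ i).choose (κ i) : ℕ) : ℝ)
        ≤ ((c + T * d i + κ i : ℕ) : ℝ) ^ κ i := by
      intro i
      have := Nat.descFactorial_le_pow (c + T * d i + κ i) (κ i)
      rw [Nat.descFactorial_eq_factorial_mul_choose] at this
      exact_mod_cast this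
    have h4 : (∏ i, ((κ i).factorial : ℝ)) * ∏ i, (((c + T * d i + κ i).choose (κ i) : ℕ) : ℝ)
        ≤ ∏ i, ((c + T * d i + κ i : ℕ) : ℝ) ^ κ i := by
      rw [← Finset.prod_mul_distrib]
      exact Finset.prod_le_prod (fun i _ => by positivity) fun i _ => h3 i
    have h5 : ∏ i, ((c + T * d i + κ i : ℕ) : ℝ) ^ κ i
        = (T:ℝ) ^ K * ∏ i, ((d i : ℝ) + (c + κ i : ℝ) * (T:ℝ)⁻¹) ^ κ i := by
      rw [← hsum, ← Finset.prod_pow_eq_pow_sum, ← Finset.prod_mul_distrib]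
      refine Finset.prod_congr rfl fun i _ => ?_
      rw [← mul_pow]
      congr 1
      push_cast
      field_simp
      ring
    have hTK : (0:ℝ) < (T:ℝ) ^ K := by positivity
    have hF : (0:ℝ) < ∏ i, ((κ i).factorial : ℝ) := Finset.prod_pos fun i _ => by positivity
    refine le_of_mul_le_mul_left ?_ hTK
    calc (T:ℝ)^K * ((P.card : ℝ) * ∏ i, ((κ i).factorial : ℝ))
        ≤ (K.factorial * ((T + K).choose K)) * ((P.card : ℝ) * ∏ i, ((κ i).factorial : ℝ)) := by
          gcongr
      _ = K.factorial * ((∏ i, ((κ i).factorial : ℝ)) * ((P.card : ℝ) * (T + K).choose K)) := by ring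
      _ ≤ K.factorial * ((∏ i, ((κ i).factorial : ℝ)) * ∏ i, (((c + T * d i + κ i).choose (κ i) : ℕ) : ℝ)) := by
          gcongr
      _ ≤ K.factorial * (∏ i, ((c + T * d i + κ i : ℕ) : ℝ) ^ κ i) := by gcongr
      _ = _ := by rw [h5]; ring
  have lim : Filter.Tendsto (fun T : ℕ => (K.factorial : ℝ) *
      ∏ i, ((d i : ℝ) + (c + κ i : ℝ) * (T:ℝ)⁻¹) ^ κ i) Filter.atTop
      (nhds ((K.factorial : ℝ) * ∏ i, ((d i : ℝ) + (c + κ i : ℝ) * 0) ^ κ i)) := by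
    refine Filter.Tendsto.const_mul _ ?_
    refine tendsto_finsetProd _ fun i _ => ?_
    refine Filter.Tendsto.pow ?_ _
    exact (tendsto_inv_atTop_nhds_zero_nat.const_mul _).const_add _
  simp only [mul_zero, add_zero] at lim
  exact ge_of_tendsto lim (Filter.eventually_atTop.2 ⟨1, fun T hT => key T hT⟩)
end

section
variable {W : Type*} [Fintype W] {J : Type*} [Fintype J]

lemma vc_growth (p : MvPolynomial W ℝ) :
    ∃ a : ℝ, 0 ≤ a ∧ ∀ w, |eval w p| ≤ Real.exp (a * (1 + ‖w‖)) := by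
  induction p using MvPolynomial.induction_on with
  | C a =>
    refine ⟨|a|, abs_nonneg _, fun w => ?_⟩
    have h1 := Real.add_one_le_exp (|a| * (1 + ‖w‖))
    have h2 : 0 ≤ |a| * ‖w‖ := by positivity
    simp only [eval_C]
    nlinarith
  | add p p' h h' =>
    obtain ⟨a, ha, h⟩ := h
    obtain ⟨a', ha', h'⟩ := h'
    refine ⟨a + a' + 1, by positivity, fun w => ?_⟩
    have hn : 0 ≤ ‖w‖ := norm_nonneg w
    have h1 : Real.exp (a * (1 + ‖w‖)) ≤ Real.exp ((a + a') * (1 + ‖w‖)) :=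
      Real.exp_le_exp.2 (by gcongr; linarith)
    have h2 : Real.exp (a' * (1 + ‖w‖)) ≤ Real.exp ((a + a') * (1 + ‖w‖)) :=
      Real.exp_le_exp.2 (by gcongr; linarith)
    have h3 : (2:ℝ) ≤ Real.exp (1 + ‖w‖) := by
      have := Real.add_one_le_exp (1 + ‖w‖); linarith
    rw [map_add, add_mul (a + a'), one_mul, Real.exp_add]
    have h4 := abs_add_le (eval w p) (eval w p')
    have h5 := Real.exp_pos ((a + a') * (1 + ‖w‖))
    have := h w
    have := h' w
    nlinarith
  | mul_X p i h =>
    obtain ⟨a, ha, h⟩ := h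
    refine ⟨a + 1, by positivity, fun w => ?_⟩
    rw [map_mul, eval_X, abs_mul, add_mul, one_mul, Real.exp_add]
    have h1 : |w i| ≤ ‖w‖ := norm_le_pi_norm w i
    have h2 := Real.add_one_le_exp (1 + ‖w‖)
    have := h w
    gcongr
    linarith

lemma vc_cont (p : MvPolynomial W ℝ) : Continuous fun w : W → ℝ => eval w p :=
  MvPolynomial.continuous_eval p

lemma vc_max (q : J → MvPolynomial W ℝ) (b : W → ℝ) (ε : J → ℝ) (w0 : W → ℝ)
    (hw0 : ∀ j, 0 < ε j * eval w0 (q j)) :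
    ∃ c : W → ℝ, (∀ j, 0 < ε j * eval c (q j)) ∧
      ∀ t, ∑ j, (eval c (q j))⁻¹ * eval c (pderiv t (q j)) - c t = b t := by
  classical
  let F : (W → ℝ) → ℝ := fun w =>
    |eval w (∏ j, q j)| * Real.exp (-∑ t, (w t ^ 2 / 2 + b t * w t))
  have hFc : Continuous F := by
    have := vc_cont (∏ j, q j)
    fun_prop
  let S : Set (W → ℝ) := {w | ∀ j, 0 ≤ ε j * eval w (q j)}
  have hS : IsClosed S := by
    have : S = ⋂ j, {w | 0 ≤ ε j * eval w (q j)} := by ext; simp [S]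
    rw [this]
    refine isClosed_iInter fun j => isClosed_le continuous_const ?_
    exact continuous_const.mul (vc_cont _)
  have hF0 : 0 < F w0 := by
    refine mul_pos (abs_pos.2 ?_) (Real.exp_pos _)
    rw [map_prod]
    refine Finset.prod_ne_zero_iff.2 fun j _ h => ?_
    have := hw0 j
    simp [h] at this
  obtain ⟨a, ha, hgrow⟩ := vc_growth (∏ j, q j)
  set B := ∑ t, |b t| with hB
  have hB0 : 0 ≤ B := Finset.sum_nonneg fun _ _ => abs_nonneg _
  have hdecay : ∀ᶠ w in Filter.cocompact (W → ℝ), F w ≤ F w0 := by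
    have h1 : ∀ᶠ w : W → ℝ in Filter.cocompact (W → ℝ), max (2 * (a + B + 1)) (a - Real.log (F w0)) ≤ ‖w‖ :=
      (tendsto_norm_cocompact_atTop (E := W → ℝ)).eventually_ge_atTop _
    filter_upwards [h1] with w hw
    have hr1 := (le_max_left _ _).trans hw
    have hr2 := (le_max_right _ _).trans hw
    have hn : 0 ≤ ‖w‖ := norm_nonneg w
    have e1 : -(B * ‖w‖) ≤ ∑ t, b t * w t := by
      rw [hB, Finset.sum_mul, ← Finset.sum_neg_distrib]
      refine Finset.sum_le_sum fun t _ => ?_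
      have h1 : |w t| ≤ ‖w‖ := norm_le_pi_norm w t
      have h2 : |b t * w t| ≤ |b t| * ‖w‖ := by rw [abs_mul]; gcongr
      exact neg_le_of_abs_le h2
    have e2 : ‖w‖ ^ 2 / 2 ≤ ∑ t, w t ^ 2 / 2 := by
      rw [← Finset.sum_div]
      gcongr
      have hle : ‖w‖ ≤ Real.sqrt (∑ t, w t ^ 2) := by
        refine (pi_norm_le_iff_of_nonneg (Real.sqrt_nonneg _)).2 fun t => ?_
        rw [Real.norm_eq_abs]
        apply Real.abs_le_sqrt
        exact Finset.single_le_sum (f := fun t => w t ^ 2) (fun _ _ => sq_nonneg _) (Finset.mem_univ t)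
      calc ‖w‖ ^ 2 ≤ (Real.sqrt (∑ t, w t ^ 2)) ^ 2 := by gcongr
        _ = _ := Real.sq_sqrt (Finset.sum_nonneg fun _ _ => sq_nonneg _)
    calc F w ≤ Real.exp (a * (1 + ‖w‖)) * Real.exp (-∑ t, (w t ^ 2 / 2 + b t * w t)) := by
          exact mul_le_mul_of_nonneg_right (hgrow w) (Real.exp_pos _).le
      _ ≤ Real.exp (Real.log (F w0)) := by
          rw [← Real.exp_add, Finset.sum_add_distrib]
          apply Real.exp_le_exp.2
          nlinarith
      _ = F w0 := Real.exp_log hF0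
  obtain ⟨c, hcS, hcmax⟩ := hFc.continuousOn.exists_isMaxOn' hS (x₀ := w0) (fun j => (hw0 j).le)
    (hdecay.filter_mono inf_le_left)
  have hFc0 : 0 < F c := lt_of_lt_of_le hF0 (hcmax (fun j => (hw0 j).le))
  have hne : ∀ j, eval c (q j) ≠ 0 := by
    intro j hj
    have : F c = 0 := by
      simp only [F]
      rw [map_prod, Finset.prod_eq_zero (Finset.mem_univ j) hj]; simp
    linarith
  have hεne : ∀ j, ε j ≠ 0 := by
    intro j hj
    have := hw0 j
    simp [hj] at this
  have hpos : ∀ j, 0 < ε j * eval c (q j) := fun j =>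
    lt_of_le_of_ne (hcS j) (mul_ne_zero (hεne j) (hne j)).symm
  refine ⟨c, hpos, ?_⟩
  let G : (W → ℝ) → ℝ := fun w =>
    ∑ j, Real.log (eval w (q j)) - ∑ t, (w t ^ 2 / 2 + b t * w t)
  have hGF : ∀ w, (∀ j, 0 < ε j * eval w (q j)) → G w = Real.log (F w) := by
    intro w hw
    have hne' : ∀ j, eval w (q j) ≠ 0 := fun j h => by have := hw j; simp [h] at this
    simp only [F, G]
    rw [Real.log_mul, Real.log_exp, Real.log_abs, map_prod, Real.log_prod]
    · ring
    · intro j _; exact hne' j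
    · rw [map_prod]; exact abs_ne_zero.2 (Finset.prod_ne_zero_iff.2 fun j _ => hne' j)
    · exact (Real.exp_pos _).ne'
  have hlm : IsLocalMax G c := by
    have hev : ∀ᶠ w in nhds c, ∀ j, 0 < ε j * eval w (q j) := by
      rw [Filter.eventually_all]
      intro j
      exact (continuous_const.mul (vc_cont (q j))).continuousAt.eventually (lt_mem_nhds (hpos j))
    filter_upwards [hev] with w hw
    rw [hGF w hw, hGF c hpos]
    apply Real.log_le_log
    · refine mul_pos (abs_pos.2 ?_) (Real.exp_pos _)
      rw [map_prod]
      refine Finset.prod_ne_zero_iff.2 fun j _ h => ?_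
      have := hw j
      simp [h] at this
    · exact hcmax (fun j => (hw j).le)
  have hd : HasFDerivAt G (∑ j, (eval c (q j))⁻¹ • vcD (q j) c
      - ∑ t, ((c t + b t) • (ContinuousLinearMap.proj t : (W → ℝ) →L[ℝ] ℝ))) c := by
    refine HasFDerivAt.sub (HasFDerivAt.fun_sum fun j _ => ?_) (HasFDerivAt.fun_sum fun t _ => ?_)
    · exact (vc_hasFDerivAt (q j) c).log (hne j)
    · have h1 : HasDerivAt (fun x : ℝ => x ^ 2 / 2 + b t * x) (c t + b t) (c t) := by
        have := ((hasDerivAt_pow 2 (c t)).div_const 2).add ((hasDerivAt_id (c t)).const_mul (b t))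
        refine HasDerivAt.congr_deriv this ?_
        simp
      exact h1.comp_hasFDerivAt c (ContinuousLinearMap.proj t : (W → ℝ) →L[ℝ] ℝ).hasFDerivAt
  have hz := hlm.hasFDerivAt_eq_zero hd
  intro t
  have := congrArg (fun L : (W → ℝ) →L[ℝ] ℝ => L (Pi.single t 1)) hz
  simp [vcD_apply, vcdd, Pi.single_apply] at this
  linarith

/-- the derivative of the logarithmic gradient map -/
noncomputable def vcHess (q : J → MvPolynomial W ℝ) (w : W → ℝ) : (W → ℝ) →L[ℝ] (W → ℝ) :=
  ContinuousLinearMap.pi fun t =>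
    ∑ j, ((eval w (q j))⁻¹ • vcD (pderiv t (q j)) w
      + eval w (pderiv t (q j)) • (-(eval w (q j) ^ 2)⁻¹) • vcD (q j) w)
    - ContinuousLinearMap.proj t

lemma vc_hess (q : J → MvPolynomial W ℝ) (w : W → ℝ) (hw : ∀ j, eval w (q j) ≠ 0) :
    HasFDerivAt (fun (c : W → ℝ) (t : W) =>
      ∑ j, (eval c (q j))⁻¹ * eval c (pderiv t (q j)) - c t) (vcHess q w) w := by
  rw [hasFDerivAt_pi']
  intro t
  refine HasFDerivAt.sub (HasFDerivAt.fun_sum fun j _ => ?_)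
    (ContinuousLinearMap.proj t : (W → ℝ) →L[ℝ] ℝ).hasFDerivAt
  have h1 := (hasDerivAt_inv (hw j)).comp_hasFDerivAt w (vc_hasFDerivAt (q j) w)
  exact h1.mul (vc_hasFDerivAt (pderiv t (q j)) w)

lemma vc_generic (q : J → MvPolynomial W ℝ) : ∃ b : W → ℝ, ∀ c : W → ℝ,
    (∀ j, eval c (q j) ≠ 0) →
    (∀ t, ∑ j, (eval c (q j))⁻¹ * eval c (pderiv t (q j)) - c t = b t) →
    ∀ v, vcHess q c v = 0 → v = 0 := by
  classical
  let s : Set (W → ℝ) := {w | (∀ j, eval w (q j) ≠ 0) ∧ (vcHess q w).det = 0}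
  let φ := fun (c : W → ℝ) (t : W) => ∑ j, (eval c (q j))⁻¹ * eval c (pderiv t (q j)) - c t
  have h := MeasureTheory.addHaar_image_eq_zero_of_det_fderivWithin_eq_zero
    (MeasureTheory.volume : MeasureTheory.Measure (W → ℝ)) (f := φ) (f' := vcHess q) (s := s)
    (fun x hx => (vc_hess q x hx.1).hasFDerivWithinAt) (fun x hx => hx.2)
  have : ∃ b, b ∉ φ '' s := by
    by_contra hcon
    push Not at hcon
    rw [Set.eq_univ_of_forall hcon] at h
    exact (isOpen_univ.measure_pos MeasureTheory.volume Set.univ_nonempty).ne' h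
  obtain ⟨b, hb⟩ := this
  refine ⟨b, fun c hc hcb v hv => ?_⟩
  have hdet : (vcHess q c).det ≠ 0 := fun h0 => hb ⟨c, ⟨hc, h0⟩, funext hcb⟩
  have hu : IsUnit (LinearMap.det (vcHess q c : (W → ℝ) →ₗ[ℝ] (W → ℝ))) := isUnit_iff_ne_zero.2 hdet
  have hk : Function.Injective (vcHess q c : (W → ℝ) →ₗ[ℝ] (W → ℝ)) :=
    ((Module.End.isUnit_iff _).1 ((LinearMap.isUnit_iff_isUnit_det _).2 hu)).1
  exact hk (by simpa using hv)
end

section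
variable {W : Type*} [Fintype W] {J : Type*} [Fintype J] {ι : Type*} [DecidableEq ι]

/-- block map on the extended variable set -/
def vcpi (π : W → ι) : W ⊕ J → Option ι := Sum.elim (fun s => some (π s)) (fun _ => none)

lemma vcBD_rename {π : W → ι} {M : ι → ℕ} {p : MvPolynomial W ℝ} (hp : vcBD π M p) :
    vcBD (vcpi (J := J) π) (fun o => o.elim 0 M) (rename Sum.inl p) := by
  rw [p.as_sum, map_sum]
  apply vcBD_sum
  intro m hm
  rw [rename_monomial, vcBD, monomial_mem_restrictSupport]
  left
  intro o
  rw [Fintype.sum_sum_type]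
  have h1 : ∀ s : W, Finsupp.mapDomain (Sum.inl : W → W ⊕ J) m (Sum.inl s) = m s :=
    fun s => Finsupp.mapDomain_apply Sum.inl_injective _ _
  have h2 : ∀ j : J, Finsupp.mapDomain (Sum.inl : W → W ⊕ J) m (Sum.inr j) = 0 :=
    fun j => Finsupp.mapDomain_of_notMem_range _ _ (by simp)
  simp only [h1, h2, vcpi, Sum.elim_inl, Sum.elim_inr]
  cases o with
  | none => simp
  | some i => simpa using hp hm i

lemma vc_count [DecidableEq J] [Fintype ι] (π : W → ι) (d : ι → ℕ) (hd : ∀ i, 1 ≤ d i)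
    (q : J → MvPolynomial W ℝ) (hq : ∀ j, vcBD π d (q j))
    (hsign : ∀ T : Finset J, ∃ w : W → ℝ, ∀ j, 0 < (if j ∈ T then (1:ℝ) else -1) * eval w (q j)) :
    (2:ℝ) ^ Fintype.card J * ((Fintype.card J).factorial *
        ∏ i, (((Fintype.card {s // π s = i}).factorial : ℕ) : ℝ)) ≤
      (Fintype.card W + Fintype.card J).factorial * ∏ i, (d i : ℝ) ^ (Fintype.card {s // π s = i}) := by
  classical
  obtain ⟨b, hb⟩ := vc_generic q
  choose w0 hw0 using hsign
  choose c hc1 hc2 using fun T : Finset J => vc_max q b (fun j => if j ∈ T then (1:ℝ) else -1) (w0 T) (hw0 T)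
  have hne : ∀ T j, eval (c T) (q j) ≠ 0 := fun T j h => by
    have := hc1 T j
    simp [h] at this
  have hcinj : Function.Injective c := by
    intro T T' h
    ext j
    have h1 := hc1 T j
    have h2 := hc1 T' j
    rw [h] at h1
    by_cases hj : j ∈ T <;> by_cases hj' : j ∈ T' <;> simp [hj, hj'] at h1 h2 ⊢ <;> linarith
  let pt : Finset J → (W ⊕ J → ℝ) := fun T => Sum.elim (c T) (fun j => (eval (c T) (q j))⁻¹)
  have hpt : Function.Injective pt := by
    intro T T' h
    apply hcinj
    funext s
    exact congrFun h (Sum.inl s)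
  let f : W ⊕ J → MvPolynomial (W ⊕ J) ℝ := Sum.elim
    (fun t => ∑ j, X (Sum.inr j) * rename Sum.inl (pderiv t (q j)) - X (Sum.inl t) - C (b t))
    (fun j => X (Sum.inr j) * rename Sum.inl (q j) - 1)
  let d' : Option ι → ℕ := fun o => o.elim 1 d
  have hmulBD : ∀ (j : J) (p : MvPolynomial W ℝ), vcBD π d p →
      vcBD (vcpi π) d' (X (Sum.inr j) * rename Sum.inl p) := by
    intro j p hp
    refine vcBD_mono ?_ (vcBD_mul (vcBD_X (vcpi π) (Sum.inr j)) (vcBD_rename hp))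
    intro o
    cases o with
    | none => simp [vcpi, d']
    | some i => simp [vcpi, d']
  have hf : ∀ s, vcBD (vcpi π) d' (f s) := by
    rintro (t | j)
    · refine vcBD_sub (vcBD_sub (vcBD_sum _ fun j _ => hmulBD j _ (vcBD_pderiv (hq j) t)) ?_) (vcBD_C _ _ _)
      refine vcBD_mono ?_ (vcBD_X (vcpi π) (Sum.inl t))
      intro o
      cases o with
      | none => simp [vcpi]
      | some i =>
        by_cases h : i = π t
        · subst h; simpa [vcpi, d'] using hd _
        · simp [vcpi, h]
    · exact vcBD_sub (hmulBD j _ (hq j)) (vcBD_one _ _)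
  have hev : ∀ T (p : MvPolynomial W ℝ), eval (pt T) (rename Sum.inl p) = eval (c T) p := by
    intro T p
    rw [eval_rename]; rfl
  have hbez := vc_bezout (vcpi π) d' f hf (Finset.univ.image pt) (by
      intro p hp s
      obtain ⟨T, _, rfl⟩ := Finset.mem_image.1 hp
      rcases s with t | j
      · simp only [f, Sum.elim_inl, map_sub, map_sum, map_mul, hev, eval_X, eval_C]
        have := hc2 T t
        simp only [pt, Sum.elim_inl, Sum.elim_inr]
        linarith
      · simp only [f, Sum.elim_inr, map_sub, map_mul, hev, eval_X, map_one]
        simp [pt, hne T j]) (by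
      intro p hp u hu
      obtain ⟨T, _, rfl⟩ := Finset.mem_image.1 hp
      have hr : ∀ p : MvPolynomial W ℝ, vcdd (rename Sum.inl p : MvPolynomial (W ⊕ J) ℝ) (pt T) u
          = vcdd p (c T) (u ∘ Sum.inl) := fun p => vcdd_rename_inl p _ _
      have hz : ∀ j, u (Sum.inr j) =
          - (eval (c T) (q j) ^ 2)⁻¹ * vcdd (q j) (c T) (u ∘ Sum.inl) := by
        intro j
        have := hu (Sum.inr j)
        simp only [f, Sum.elim_inr, vcdd_sub, vcdd_mul, vcdd_X, vcdd_one, hr, hev, eval_X, pt] at this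
        have hn := hne T j
        field_simp at this ⊢
        linarith
      have hw : u ∘ Sum.inl = 0 := by
        apply hb (c T) (hne T) (hc2 T)
        funext t
        have := hu (Sum.inl t)
        simp only [f, Sum.elim_inl, vcdd_sub, vcdd_sum, vcdd_mul, vcdd_X, vcdd_C, hr, hev, eval_X,
          hz] at this
        simp only [vcHess, ContinuousLinearMap.coe_pi', sub_apply, sum_apply,
          add_apply, smul_apply, smul_eq_mul, vcD_apply,
          ContinuousLinearMap.proj_apply, Pi.zero_apply]
        simp only [pt, Sum.elim_inr, sub_zero] at this
        rw [← this]
        congr 1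
        refine Finset.sum_congr rfl fun j _ => ?_
        ring
      funext s
      rcases s with t | j
      · exact congrFun hw t
      · rw [hz, hw]; simp [vcdd])
  rw [Finset.card_image_of_injective _ hpt, Finset.card_univ, Fintype.card_finset,
    Fintype.prod_option, Fintype.prod_option, Fintype.card_sum] at hbez
  have e0 : Fintype.card {s : W ⊕ J // vcpi π s = none} = Fintype.card J := by
    refine (Fintype.card_congr (Equiv.ofBijective (fun j : J => ⟨Sum.inr j, rfl⟩) ⟨?_, ?_⟩)).symm
    · intro a a' h
      exact Sum.inr_injective (congrArg Subtype.val h)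
    · rintro ⟨s | j, h⟩
      · simp [vcpi] at h
      · exact ⟨j, rfl⟩
  have e1 : ∀ i, Fintype.card {s : W ⊕ J // vcpi π s = some i} = Fintype.card {s // π s = i} := by
    intro i
    refine (Fintype.card_congr (Equiv.ofBijective
      (fun s : {s // π s = i} => ⟨Sum.inl s.1, congrArg some s.2⟩) ⟨?_, ?_⟩)).symm
    · intro a a' h
      exact Subtype.ext (Sum.inl_injective (congrArg Subtype.val h))
    · rintro ⟨s | j, h⟩
      · exact ⟨⟨s, by simpa [vcpi] using h⟩, rfl⟩
      · simp [vcpi] at h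
  simp only [e0, e1] at hbez
  simpa [d'] using hbez
end

lemma vc_subst {A B : Type*} (w : A → ℝ) (x : B → ℝ) (y : MvPolynomial (A ⊕ B) ℝ) :
    eval w (aeval (Sum.elim (fun s => X s) (fun j => C (x j))) y : MvPolynomial A ℝ)
      = eval (Sum.elim w x) y := by
  induction y using MvPolynomial.induction_on with
  | C a => simp
  | add p p' h h' => rw [map_add, map_add, map_add, h, h']
  | mul_X p i h =>
    rw [map_mul, map_mul, map_mul, h, aeval_X, eval_X]
    rcases i with i | i <;> simp

lemma vc_numeric (l : ℕ) (k d : Fin l → ℕ) (hk : ∀ i, 0 < k i) (hd : ∀ i, 1 ≤ d i) (n K : ℕ)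
    (hK : K = ∑ i, k i) (hK0 : 0 < K)
    (h : (2:ℝ) ^ n * ((n.factorial : ℝ) * ∏ i, ((k i).factorial : ℝ)) ≤
      (K + n).factorial * ∏ i, (d i : ℝ) ^ k i) :
    (2:ℝ) ^ n ≤ (25 / 2) ^ K * (∏ i, ((K * d i : ℝ) / k i) ^ k i) ^ 2 := by
  classical
  have hKr : (0:ℝ) < K := by exact_mod_cast hK0
  have hkr : ∀ i, (0:ℝ) < k i := fun i => by exact_mod_cast hk i
  have hdr : ∀ i, (0:ℝ) < d i := fun i => by exact_mod_cast hd i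
  let κ : Option (Fin l) → ℕ := fun o => o.elim n k
  let x : Option (Fin l) → ℝ := fun o => o.elim 1 (fun i => 2 / 5 * (k i / K))
  have hx : ∀ o, 0 ≤ x o := by
    intro o; cases o <;> simp [x]; positivity
  have hsx : ∑ o, x o = 7 / 5 := by
    rw [Fintype.sum_option]
    simp only [x, Option.elim]
    rw [← Finset.mul_sum, ← Finset.sum_div, ← Nat.cast_sum, ← hK, div_self hKr.ne']
    norm_num
  have hsκ : ∑ o, κ o = K + n := by
    rw [Fintype.sum_option]; simp only [κ, Option.elim]; omega
  have hmult := Finset.sum_pow_eq_sum_piAntidiag Finset.univ x (K + n)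
  set M : ℝ := (Nat.multinomial Finset.univ κ : ℝ) with hM
  have h1 : M * ∏ o, x o ^ κ o ≤ (7 / 5) ^ (K + n) := by
    rw [← hsx, hmult]
    refine Finset.single_le_sum (f := fun κ => (Nat.multinomial Finset.univ κ : ℝ) * ∏ o, x o ^ κ o)
      (fun i _ => ?_) ?_
    · exact mul_nonneg (Nat.cast_nonneg _) (Finset.prod_nonneg fun o _ => pow_nonneg (hx o) _)
    · simp [hsκ]
  have h2 : ((n.factorial : ℝ) * ∏ i, ((k i).factorial : ℝ)) * M = (K + n).factorial := by
    have := Nat.multinomial_spec Finset.univ κ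
    rw [hsκ, Fintype.prod_option] at this
    rw [hM, ← this]
    push_cast
    rfl
  have hfp : 0 < (n.factorial : ℝ) * ∏ i, ((k i).factorial : ℝ) :=
    mul_pos (by positivity) (Finset.prod_pos fun i _ => by positivity)
  have h3 : (2:ℝ) ^ n ≤ M * ∏ i, (d i : ℝ) ^ k i := by
    rw [← h2] at h
    refine le_of_mul_le_mul_left ?_ hfp
    linarith
  have h4 : ∏ o, x o ^ κ o = (2/5)^K * ∏ i, ((k i : ℝ) / K) ^ k i := by
    rw [Fintype.prod_option]
    simp only [x, κ, Option.elim, one_pow, one_mul, mul_pow, Finset.prod_mul_distrib]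
    rw [Finset.prod_pow_eq_pow_sum, ← hK]
  set R := ∏ i, ((K * d i : ℝ) / k i) ^ k i with hR
  have hRpos : 0 < R := Finset.prod_pos fun i _ => by
    have := hkr i; have := hdr i; positivity
  have h5 : (∏ i, ((k i : ℝ) / K) ^ k i) * R = ∏ i, (d i : ℝ) ^ k i := by
    rw [hR, ← Finset.prod_mul_distrib]
    refine Finset.prod_congr rfl fun i _ => ?_
    rw [← mul_pow]
    congr 1
    have := (hkr i).ne'
    field_simp
  have h6 : (2:ℝ) ^ n * (2/5)^K ≤ (7/5)^(K+n) * R := by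
    calc (2:ℝ) ^ n * (2/5)^K ≤ (M * ∏ i, (d i : ℝ) ^ k i) * (2/5)^K := by gcongr
      _ = (M * ∏ o, x o ^ κ o) * R := by rw [← h5, h4]; ring
      _ ≤ _ := by gcongr
  have h7 : ((2:ℝ) ^ n * (2/5)^K)^2 ≤ ((7/5)^(K+n) * R)^2 := by gcongr
  have h8 : ((7/5:ℝ)^(K+n))^2 ≤ 2 ^ (K+n) := by
    rw [← pow_mul, mul_comm, pow_mul]
    gcongr
    norm_num
  have h9 : (2:ℝ)^n * ((2:ℝ)^n * (4/25)^K) ≤ (2:ℝ)^n * (2^K * R^2) := by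
    calc (2:ℝ)^n * ((2:ℝ)^n * (4/25)^K) = ((2:ℝ) ^ n * (2/5)^K)^2 := by
          have : (4/25:ℝ) = (2/5)^2 := by norm_num
          rw [this, ← pow_mul]; ring
      _ ≤ ((7/5)^(K+n) * R)^2 := h7
      _ = ((7/5)^(K+n))^2 * R^2 := by ring
      _ ≤ 2^(K+n) * R^2 := by gcongr
      _ = _ := by ring
  have h10 := le_of_mul_le_mul_left h9 (by positivity)
  have h11 : (25/2:ℝ)^K * (4/25)^K = 2^K := by rw [← mul_pow]; norm_num
  refine le_of_mul_le_mul_right ?_ (show (0:ℝ) < (4/25)^K by positivity)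
  calc (2:ℝ)^n * (4/25)^K ≤ 2^K * R^2 := h10
    _ = _ := by rw [← h11]; ring

theorem improved_vc_bound_polynomial_networks
    (l : ℕ) (hl : 1 ≤ l) (k : Fin l → ℕ) (hk : ∀ i, 2 ≤ k i)
    (d : Fin l → ℕ) (hd : ∀ i, 1 ≤ d i)
    (K : ℕ) (hK : K = ∑ i, k i)
    (D : ℕ) (hD : D = ∑ i, d i)
    (H : ℝ) (hH : H = ∑ i, ((k i : ℝ) / K) * Real.logb 2 ((D * k i : ℝ) / (K * d i)))
    (N : ℕ)
    (y : MvPolynomial (((i : Fin l) × Fin (k i)) ⊕ Fin N) ℝ)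
    (hdeg : ∀ m ∈ y.support, ∀ i : Fin l,
      ∑ t : Fin (k i), m (Sum.inl ⟨i, t⟩) ≤ d i) :
    ∀ S : Finset (Fin N → ℝ),
      (∀ T ⊆ S, ∃ w : ((i : Fin l) × Fin (k i)) → ℝ,
        (↑S : Set (Fin N → ℝ)) ∩
          {x | 0 ≤ MvPolynomial.eval (Sum.elim w x) y} = ↑T) →
      (S.card : ℝ) ≤ 2 * K * (Real.logb 2 (4 * Real.exp 1 * D) - H) := by
  classical
  intro S hS
  let i0 : Fin l := ⟨0, hl⟩
  have hK0 : 0 < K := by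
    rw [hK]
    have h1 := Finset.single_le_sum (f := k) (fun _ _ => Nat.zero_le _) (Finset.mem_univ i0)
    have := hk i0; omega
  have hD0 : 0 < D := by
    rw [hD]
    have h1 := Finset.single_le_sum (f := d) (fun _ _ => Nat.zero_le _) (Finset.mem_univ i0)
    have := hd i0; omega
  -- substituting the points of `S`
  let r : S → MvPolynomial ((i : Fin l) × Fin (k i)) ℝ := fun x =>
    aeval (Sum.elim (fun s => X s) (fun j => C (x.1 j))) y
  have hr : ∀ x w, eval w (r x) = eval (Sum.elim w x.1) y := by
    intro x w
    exact vc_subst w x.1 y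
  have hrBD : ∀ x, vcBD (fun s : (i : Fin l) × Fin (k i) => s.1) d (r x) := by
    intro x
    simp only [r]
    rw [y.as_sum, map_sum]
    apply vcBD_sum
    intro m hm
    rw [aeval_monomial, Finsupp.prod_fintype _ _ (by simp), Fintype.prod_sum_type]
    have h1 : vcBD (fun s : (i : Fin l) × Fin (k i) => s.1) 0
        (algebraMap ℝ (MvPolynomial ((i : Fin l) × Fin (k i)) ℝ) (coeff m y)) := vcBD_C _ _ _
    have h2 : vcBD (fun s : (i : Fin l) × Fin (k i) => s.1) (∑ s, m (Sum.inl s) • Pi.single s.1 1)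
        (∏ s : (i : Fin l) × Fin (k i), (X s : MvPolynomial ((i : Fin l) × Fin (k i)) ℝ) ^ m (Sum.inl s)) :=
      vcBD_prod _ fun s => vcBD_pow (vcBD_X (fun s : (i : Fin l) × Fin (k i) => s.1) s) _
    have h3 : vcBD (fun s : (i : Fin l) × Fin (k i) => s.1) (∑ j : Fin N, m (Sum.inr j) • (0 : Fin l → ℕ))
        (∏ j : Fin N, (C (x.1 j) : MvPolynomial ((i : Fin l) × Fin (k i)) ℝ) ^ m (Sum.inr j)) :=
      vcBD_prod _ fun s => vcBD_pow (vcBD_C _ _ _) _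
    refine vcBD_mono ?_ (vcBD_mul h1 (vcBD_mul h2 h3))
    intro i
    have := hdeg m hm i
    refine le_trans (le_of_eq ?_) this
    simp only [smul_zero, Finset.sum_const_zero, add_zero, zero_add, Finset.sum_apply, Pi.smul_apply]
    rw [Fintype.sum_sigma, Finset.sum_eq_single i]
    · simp
    · intro i' _ hi'
      simp [hi'.symm]
    · simp
  choose w hw using hS
  -- one parameter for each subset
  let w' : Finset S → ((i : Fin l) × Fin (k i)) → ℝ := fun T =>
    w (T.map (Function.Embedding.subtype _)) (by
      intro x hx
      obtain ⟨a, _, rfl⟩ := Finset.mem_map.1 hx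
      exact a.2)
  have hw' : ∀ T (x : S), 0 ≤ eval (w' T) (r x) ↔ x ∈ T := by
    intro T x
    have h1 := hw (T.map (Function.Embedding.subtype _)) (by
      intro x hx
      obtain ⟨a, _, rfl⟩ := Finset.mem_map.1 hx
      exact a.2)
    have h2 := Set.ext_iff.1 h1 x.1
    simp only [Set.mem_inter_iff, Finset.mem_coe, x.2, true_and, Set.mem_ofPred_eq] at h2
    rw [hr]
    refine h2.trans ?_
    simp
  obtain ⟨δ, hδ, hδ'⟩ : ∃ δ : ℝ, 0 < δ ∧ ∀ T (x : S), x ∉ T → eval (w' T) (r x) + δ < 0 := by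
    have : ∀ᶠ δ : ℝ in nhdsWithin 0 (Set.Ioi 0), ∀ z : Finset S × S,
        z.2 ∉ z.1 → eval (w' z.1) (r z.2) + δ < 0 := by
      rw [Filter.eventually_all]
      intro z
      by_cases hz : z.2 ∈ z.1
      · simp [hz]
      · have h1 : eval (w' z.1) (r z.2) < 0 := by
          rw [← not_le, hw']; exact hz
        have h2 : ∀ᶠ δ : ℝ in nhds 0, δ < - eval (w' z.1) (r z.2) := gt_mem_nhds (by linarith)
        filter_upwards [nhdsWithin_le_nhds h2] with δ h _
        linarith
    obtain ⟨δ, h1, h2⟩ := (this.and self_mem_nhdsWithin).exists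
    exact ⟨δ, h2, fun T x => h1 (T, x)⟩
  have hcount := vc_count (fun s : (i : Fin l) × Fin (k i) => s.1) d hd (fun x : S => r x + C δ)
    (fun x => vcBD_add (hrBD x) (vcBD_C _ _ _)) (by
      intro T
      refine ⟨w' T, fun x => ?_⟩
      rw [map_add, eval_C]
      by_cases hx : x ∈ T
      · have := (hw' T x).2 hx
        simp [hx]; linarith
      · have := hδ' T x hx
        simp [hx]; linarith)
  have hfib : ∀ i, Fintype.card {s : (i : Fin l) × Fin (k i) // s.1 = i} = k i := by
    intro i
    rw [← Fintype.card_fin (k i)]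
    refine (Fintype.card_congr (Equiv.ofBijective
      (fun t : Fin (k i) => ⟨⟨i, t⟩, rfl⟩) ⟨?_, ?_⟩)).symm
    · intro a a' h
      exact eq_of_heq (Sigma.mk.inj (congrArg Subtype.val h)).2
    · rintro ⟨⟨i', t⟩, h⟩
      dsimp only at h
      subst h
      exact ⟨t, rfl⟩
  simp only [hfib] at hcount
  rw [Fintype.card_coe, Fintype.card_sigma] at hcount
  simp only [Fintype.card_fin] at hcount
  rw [← hK] at hcount
  have hnum := vc_numeric l k d (fun i => by have := hk i; omega) hd S.card K hK hK0 hcount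
  -- take logarithms
  have hKr : (0:ℝ) < K := by exact_mod_cast hK0
  have hDr : (0:ℝ) < D := by exact_mod_cast hD0
  have hkr : ∀ i, (0:ℝ) < k i := fun i => by have := hk i; exact_mod_cast (by omega : 0 < k i)
  have hdr : ∀ i, (0:ℝ) < d i := fun i => by exact_mod_cast hd i
  have hRpos : ∀ i, 0 < ((K * d i : ℝ) / k i) := fun i => by
    have := hkr i; have := hdr i; positivity
  have hlog := Real.logb_le_logb_of_le (b := 2) (by norm_num) (by positivity) hnum
  rw [Real.logb_pow, Real.logb_self_eq_one (by norm_num), mul_one, Real.logb_mul (by positivity)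
    (pow_ne_zero _ (Finset.prod_pos fun i _ => pow_pos (hRpos i) _).ne'), Real.logb_pow, Real.logb_pow,
    Real.logb_prod _ _ (fun i _ => (pow_pos (hRpos i) _).ne')] at hlog
  simp only [Real.logb_pow] at hlog
  have hKH : K * H = K * Real.logb 2 D - ∑ i, (k i : ℝ) * Real.logb 2 ((K * d i : ℝ) / k i) := by
    have e : (K : ℝ) = ∑ i, (k i : ℝ) := by rw [hK]; push_cast; rfl
    have e2 : (K : ℝ) * Real.logb 2 D = ∑ i, (k i : ℝ) * Real.logb 2 D := by
      rw [← Finset.sum_mul, ← e]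
    rw [e2, ← Finset.sum_sub_distrib, hH, Finset.mul_sum]
    refine Finset.sum_congr rfl fun i _ => ?_
    rw [← mul_sub, ← Real.logb_div hDr.ne' (hRpos i).ne', ← mul_assoc, mul_div_cancel₀ _ hKr.ne']
    congr 2
    have := (hkr i).ne'
    field_simp
  have h4 : Real.logb 2 (25 / 2) ≤ 2 * Real.logb 2 (4 * Real.exp 1) := by
    have : Real.logb 2 ((4 * Real.exp 1) ^ 2) = 2 * Real.logb 2 (4 * Real.exp 1) := by
      rw [Real.logb_pow]; norm_num
    rw [← this]
    apply Real.logb_le_logb_of_le (by norm_num) (by norm_num)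
    have := Real.add_one_le_exp (1:ℝ)
    nlinarith
  rw [Real.logb_mul (by positivity) hDr.ne']
  have h5 := mul_le_mul_of_nonneg_left h4 hKr.le
  push_cast at hlog
  nlinarith
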